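/- arXiv:2211.01306 — 2 statements merged into one kernel-verified Lean document; each statement's English description precedes it below -/
import Mathlib

section
/- Let K ≥ 2, τ > 0, and β ∈ ℝ^K with all β_i > 0, and let X have the Concrete distribution C(β, τ). Then for all indices i, k, the log-ratio variance satisfies Var[log(X_i/X_k)] = (π²/(3τ²))(1 − δ_{ik}), where δ is the Kronecker delta. -/
open MeasureTheory Finset

noncomputable def fillMap (K : ℕ) (u : Fin (K - 1) → ℝ) : Fin K → ℝ :=
  fun i => if h : (i : ℕ) < K - 1 then u ⟨i, h⟩ else 1 - ∑ j, u j

/-- The `(K-1)`-dimensional Lebesgue measure on the probability simplex `S_K`. -/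
noncomputable def simplexMeasure (K : ℕ) : Measure (Fin K → ℝ) :=
  Measure.map (fillMap K)
    (volume.restrict {u : Fin (K - 1) → ℝ | (∀ j, 0 ≤ u j) ∧ ∑ j, u j ≤ 1})

/-- The density of the Concrete distribution `C(β, τ)` on the simplex. -/
noncomputable def concreteDensity (K : ℕ) (β : Fin K → ℝ) (τ : ℝ) (x : Fin K → ℝ) : ℝ :=
  (Nat.factorial (K - 1) : ℝ) * τ ^ (K - 1) * (∑ j, β j / x j ^ τ) ^ (-(K : ℝ)) *
    ∏ i, β i / x i ^ (τ + 1)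

/-- Kronecker delta. -/
def kd {K : ℕ} (a b : Fin K) : ℝ := if a = b then 1 else 0

lemma lint_A {τ b a : ℝ} (hτ : 0 < τ) (hb : 0 < b) (ha : 0 < a) :
    ∫⁻ y in Set.Ioi (0:ℝ), ENNReal.ofReal (τ * y ^ (-(τ * a) - 1) * Real.exp (-(b * y ^ (-τ))))
      = ENNReal.ofReal ((1 / b) ^ a * Real.Gamma a) := by
  have h1 := integral_comp_rpow_Ioi (fun z : ℝ => z ^ (a - 1) * Real.exp (-(b * z)))
    (p := -τ) (by linarith)
  rw [Real.integral_rpow_mul_exp_neg_mul_Ioi ha hb] at h1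
  have h2 : ∫ y in Set.Ioi (0:ℝ), τ * y ^ (-(τ * a) - 1) * Real.exp (-(b * y ^ (-τ)))
      = (1 / b) ^ a * Real.Gamma a := by
    rw [← h1]
    refine setIntegral_congr_fun measurableSet_Ioi (fun y hy => ?_)
    have hy' : 0 < y := hy
    simp only [smul_eq_mul, abs_neg, abs_of_pos hτ]
    rw [← Real.rpow_mul hy'.le, ← mul_assoc, mul_assoc τ (y ^ (-τ - 1)), ← Real.rpow_add hy']
    congr 3
    ring
  have hG := Real.Gamma_pos_of_pos ha
  have hne : ∫ y in Set.Ioi (0:ℝ), τ * y ^ (-(τ * a) - 1) * Real.exp (-(b * y ^ (-τ))) ≠ 0 := by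
    rw [h2]; positivity
  rw [← h2, ofReal_integral_eq_lintegral_ofReal (Integrable.of_integral_ne_zero hne)]
  filter_upwards [ae_restrict_mem measurableSet_Ioi] with y hy
  have hy' : 0 < y := hy
  simp only [Pi.zero_apply]
  positivity

noncomputable def gfun (b τ s y : ℝ) : ℝ :=
  if 0 < y then b * (τ * y ^ (s - τ - 1) * Real.exp (-(b * y ^ (-τ)))) else 0

lemma measurable_gfun (b τ s : ℝ) : Measurable (gfun b τ s) := by
  unfold gfun
  refine Measurable.ite measurableSet_Ioi ?_ measurable_const
  fun_prop

lemma lint_B {τ b s : ℝ} (hτ : 0 < τ) (hb : 0 < b) (hs : s < τ) :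
    ∫⁻ y, ENNReal.ofReal (gfun b τ s y) 
      = ENNReal.ofReal (b ^ (s / τ) * Real.Gamma (1 - s / τ)) := by
  have ha : 0 < 1 - s / τ := by
    rw [sub_pos, div_lt_one hτ]; exact hs
  have h0 : (fun y => ENNReal.ofReal (gfun b τ s y)) = (Set.Ioi (0:ℝ)).indicator
      (fun y => ENNReal.ofReal b * ENNReal.ofReal (τ * y ^ (-(τ * (1 - s / τ)) - 1) *
        Real.exp (-(b * y ^ (-τ))))) := by
    ext y
    by_cases hy : 0 < y
    · rw [Set.indicator_of_mem (by exact hy), gfun, if_pos hy, ENNReal.ofReal_mul hb.le]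
      congr 5
      field_simp
      ring
    · rw [Set.indicator_of_notMem (by exact hy), gfun, if_neg hy, ENNReal.ofReal_zero]
  rw [h0, lintegral_indicator measurableSet_Ioi, lintegral_const_mul' _ _ ENNReal.ofReal_ne_top,
    lint_A hτ hb ha, ← ENNReal.ofReal_mul hb.le, ← mul_assoc]
  congr 2
  rw [one_div, Real.inv_rpow hb.le, ← Real.rpow_neg hb.le]
  nth_rewrite 1 [← Real.rpow_one b]
  rw [← Real.rpow_add hb]
  congr 1
  ring

lemma lint_C (m : ℕ) (f : Fin m → ℝ → ENNReal) (hf : ∀ j, Measurable (f j)) :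
    ∫⁻ y : Fin m → ℝ, ∏ j, f j (y j) = ∏ j, ∫⁻ t, f j t := by
  induction m with
  | zero => simp [volume_pi]
  | succ m ih =>
    rw [(volume_preserving_piFinSuccAbove (fun _ : Fin (m+1) => ℝ) 0).symm.lintegral_map_equiv]
    rw [Measure.volume_eq_prod, Fin.prod_univ_succ]
    simp only [Fin.prod_univ_succ, MeasurableEquiv.piFinSuccAbove_symm_apply,
      Fin.insertNthEquiv_zero, Fin.consEquiv_apply, Fin.cons_zero, Fin.cons_succ]
    have := fun j : Fin m => hf j.succ
    rw [lintegral_prod_mul (g := fun y : Fin m → ℝ => ∏ j, f j.succ (y j)) (hf 0).aemeasurable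
      (Finset.measurable_prod _ (fun j _ => (this j).comp (measurable_pi_apply j))).aemeasurable,
      ih _ (fun j => hf j.succ)]

def addLast (n : ℕ) (S : ℝ) (v : Fin n → ℝ) : Fin (n+1) → ℝ :=
  fun i => if h : (i : ℕ) < n then v ⟨i, h⟩ else S

lemma measurable_addLast (n : ℕ) : Measurable (fun p : ℝ × (Fin n → ℝ) => addLast n p.1 p.2) := by
  refine measurable_pi_lambda _ (fun i => ?_)
  unfold addLast
  split_ifs <;> fun_prop

lemma fillMap_eq (n : ℕ) (u : Fin n → ℝ) : fillMap (n+1) u = addLast n (1 - ∑ j, u j) u := rfl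

lemma sum_addLast (n : ℕ) (S : ℝ) (v : Fin n → ℝ) : ∑ i, addLast n S v i = ∑ j, v j + S := by
  rw [Fin.sum_univ_castSucc]
  simp [addLast]

lemma lint_D (n : ℕ) (H : (Fin (n+1) → ℝ) → ENNReal) (hH : Measurable H)
    (h0 : ∀ y, ¬ 0 < ∑ j, y j → H y = 0) :
    ∫⁻ u : Fin n → ℝ, ∫⁻ S in Set.Ioi (0:ℝ), ENNReal.ofReal (S ^ n) * H (S • fillMap (n+1) u)
      = ∫⁻ y, H y := by
  have hm : Measurable (fun p : (Fin n → ℝ) × ℝ => addLast n (p.2 - ∑ j, p.1 j) p.1) :=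
    (measurable_addLast n).comp (f := fun p : (Fin n → ℝ) × ℝ => (p.2 - ∑ j, p.1 j, p.1))
      (by fun_prop)
  have hm' : Measurable (fun p : (Fin n → ℝ) × ℝ => p.2 • fillMap (n+1) p.1) := by
    refine Measurable.smul measurable_snd ?_
    exact (measurable_addLast n).comp (f := fun p : (Fin n → ℝ) × ℝ => (1 - ∑ j, p.1 j, p.1))
      (by fun_prop)
  rw [lintegral_lintegral_swap]
  swap
  · have := hH.comp hm'
    refine Measurable.aemeasurable ?_
    exact Measurable.mul (by fun_prop) this
  have h1 : ∀ S ∈ Set.Ioi (0:ℝ),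
      ∫⁻ u : Fin n → ℝ, ENNReal.ofReal (S ^ n) * H (S • fillMap (n+1) u)
      = ∫⁻ v : Fin n → ℝ, H (addLast n (S - ∑ j, v j) v) := by
    intro S hS
    have hS' : 0 < S := hS
    have hms : Measurable (fun v : Fin n → ℝ => H (addLast n (S - ∑ j, v j) v)) :=
      (hH.comp hm).comp (f := fun v : Fin n → ℝ => (v, S)) (by fun_prop)
    have e1 : ∀ u : Fin n → ℝ, S • fillMap (n+1) u
        = addLast n (S - ∑ j, (S • u) j) (S • u) := by
      intro u
      rw [fillMap_eq]
      ext i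
      simp only [Pi.smul_apply, smul_eq_mul, addLast, ← Finset.mul_sum]
      split_ifs <;> ring
    simp only [e1]
    rw [lintegral_const_mul' _ _ ENNReal.ofReal_ne_top]
    have e2 := lintegral_map (μ := (volume : Measure (Fin n → ℝ))) hms
      (measurable_const_smul S)
    rw [← e2, Measure.map_addHaar_smul _ hS'.ne', lintegral_smul_measure, smul_eq_mul, ← mul_assoc,
      ← ENNReal.ofReal_mul (by positivity)]
    have : S ^ n * |(S ^ Module.finrank ℝ (Fin n → ℝ))⁻¹| = 1 := by
      rw [abs_of_pos (by positivity), Module.finrank_fin_fun]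
      field_simp
    rw [this]; simp
  rw [setLIntegral_congr_fun measurableSet_Ioi h1, ← lintegral_indicator measurableSet_Ioi]
  have h2 : ∀ S : ℝ, (Set.Ioi (0:ℝ)).indicator
      (fun S => ∫⁻ v : Fin n → ℝ, H (addLast n (S - ∑ j, v j) v)) S
      = ∫⁻ v : Fin n → ℝ, H (addLast n (S - ∑ j, v j) v) := by
    intro S
    by_cases hS : S ∈ Set.Ioi (0:ℝ)
    · rw [Set.indicator_of_mem hS]
    · rw [Set.indicator_of_notMem hS]
      have : ∀ v : Fin n → ℝ, H (addLast n (S - ∑ j, v j) v) = 0 := by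
        intro v
        apply h0
        rw [sum_addLast]
        simpa using hS
      simp [this]
  simp only [h2]
  rw [lintegral_lintegral_swap]
  swap
  · exact ((hH.comp hm).comp measurable_swap).aemeasurable
  have h3 : ∀ v : Fin n → ℝ, ∫⁻ S, H (addLast n (S - ∑ j, v j) v) = ∫⁻ t, H (addLast n t v) :=
    fun v => lintegral_sub_right_eq_self (fun t => H (addLast n t v)) _
  simp only [h3]
  rw [(volume_preserving_piFinSuccAbove (fun _ : Fin (n+1) => ℝ)
    (Fin.last n)).symm.lintegral_map_equiv]
  have h4 : ∀ p : ℝ × (Fin n → ℝ),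
      (MeasurableEquiv.piFinSuccAbove (fun _ : Fin (n+1) => ℝ) (Fin.last n)).symm p
      = addLast n p.1 p.2 := by
    intro p
    ext i
    rw [MeasurableEquiv.piFinSuccAbove_symm_apply]
    refine Fin.lastCases ?_ (fun j => ?_) i
    · simp [addLast]
    · simp [addLast]
  simp only [h4]
  rw [Measure.volume_eq_prod]
  exact (lintegral_prod_symm _ (hH.comp (measurable_addLast n)).aemeasurable).symm

lemma lint_E (n : ℕ) {τ : ℝ} (hτ : 0 < τ) (β s x : Fin (n+1) → ℝ) (hβ : ∀ j, 0 < β j)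
    (hs : ∑ j, s j = 0) (hx : ∀ j, 0 < x j) :
    ∫⁻ S in Set.Ioi (0:ℝ), ENNReal.ofReal (S ^ n) *
        ∏ j, ENNReal.ofReal (gfun (β j) τ (s j) ((S • x) j))
      = ENNReal.ofReal ((∏ j, x j ^ s j) * concreteDensity (n+1) β τ x) := by
  set b := ∑ j, β j / x j ^ τ with hb
  have hbpos : 0 < b := Finset.sum_pos
    (fun j _ => div_pos (hβ j) (Real.rpow_pos_of_pos (hx j) _)) Finset.univ_nonempty
  set C := τ ^ n * ∏ j, (β j * x j ^ (s j - τ - 1)) with hC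
  have hCpos : 0 < C := mul_pos (by positivity)
    (Finset.prod_pos (fun j _ => mul_pos (hβ j) (Real.rpow_pos_of_pos (hx j) _)))
  have h1 : ∀ S ∈ Set.Ioi (0:ℝ), ENNReal.ofReal (S ^ n) *
        ∏ j, ENNReal.ofReal (gfun (β j) τ (s j) ((S • x) j))
      = ENNReal.ofReal C * ENNReal.ofReal (τ * S ^ (-(τ * ((n:ℝ)+1)) - 1) *
        Real.exp (-(b * S ^ (-τ)))) := by
    intro S hS
    have hS' : 0 < S := hS
    rw [← ENNReal.ofReal_prod_of_nonneg, ← ENNReal.ofReal_mul (by positivity),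
      ← ENNReal.ofReal_mul hCpos.le]
    · congr 1
      have e1 : ∀ j, gfun (β j) τ (s j) ((S • x) j)
          = (β j * x j ^ (s j - τ - 1)) * τ * S ^ (s j - τ - 1)
            * Real.exp (-(β j / x j ^ τ * S ^ (-τ))) := by
        intro j
        have : 0 < (S • x) j := mul_pos hS' (hx j)
        rw [gfun, if_pos this, Pi.smul_apply, smul_eq_mul, Real.mul_rpow hS'.le (hx j).le,
          Real.mul_rpow hS'.le (hx j).le, Real.rpow_neg (hx j).le, div_eq_mul_inv]
        have : β j * (S ^ (-τ) * (x j ^ τ)⁻¹) = β j * (x j ^ τ)⁻¹ * S ^ (-τ) := by ring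
        rw [this]
        ring
      simp only [e1, Finset.prod_mul_distrib, ← Real.exp_sum, Finset.sum_neg_distrib,
        ← Finset.sum_mul, ← Real.rpow_sum_of_pos hS', Finset.sum_sub_distrib, hs]
      rw [← hb, hC]
      simp only [Finset.prod_mul_distrib, Finset.prod_const, Finset.sum_const, Finset.card_univ,
        Fintype.card_fin, nsmul_eq_mul]
      have e2 : S ^ (-(τ * ((n:ℝ)+1)) - 1)
          = S ^ n * S ^ (0 - ((n+1:ℕ):ℝ) * τ - ((n+1:ℕ):ℝ) * 1) := by
        rw [← Real.rpow_natCast, ← Real.rpow_add hS']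
        congr 1
        push_cast
        ring
      rw [e2]
      ring
    · intro j _
      unfold gfun
      split_ifs with h
      · have := hβ j
        positivity
      · exact le_rfl
  rw [setLIntegral_congr_fun measurableSet_Ioi h1, lintegral_const_mul' _ _ ENNReal.ofReal_ne_top,
    lint_A hτ hbpos (by positivity), ← ENNReal.ofReal_mul hCpos.le]
  congr 1
  rw [concreteDensity, ← hb, hC, Real.Gamma_nat_eq_factorial, one_div, Real.inv_rpow hbpos.le,
    ← Real.rpow_neg hbpos.le]
  have e3 : ∏ j, (β j * x j ^ (s j - τ - 1)) = (∏ j, x j ^ s j) * ∏ j, β j / x j ^ (τ + 1) := by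
    rw [← Finset.prod_mul_distrib]
    refine Finset.prod_congr rfl (fun j _ => ?_)
    rw [show s j - τ - 1 = s j - (τ + 1) by ring, Real.rpow_sub (hx j)]
    ring
  rw [e3]
  push_cast
  ring

lemma measurable_fillMap (n : ℕ) : Measurable (fillMap (n+1)) :=
  (measurable_addLast n).comp (f := fun u : Fin n → ℝ => (1 - ∑ j, u j, u)) (by fun_prop)

lemma measurable_density (K : ℕ) (β : Fin K → ℝ) (τ : ℝ) : Measurable (concreteDensity K β τ) := by
  unfold concreteDensity
  fun_prop

lemma density_zero (K : ℕ) (β : Fin K → ℝ) {τ : ℝ} (hτ : 0 < τ) (x : Fin K → ℝ) (j : Fin K)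
    (hj : x j = 0) : concreteDensity K β τ x = 0 := by
  unfold concreteDensity
  rw [Finset.prod_eq_zero (Finset.mem_univ j), mul_zero]
  rw [hj, Real.zero_rpow (by linarith), div_zero]

lemma density_nonneg (K : ℕ) (β : Fin K → ℝ) {τ : ℝ} (hτ : 0 < τ) (hβ : ∀ j, 0 < β j)
    (x : Fin K → ℝ) (hx : ∀ j, 0 ≤ x j) : 0 ≤ concreteDensity K β τ x := by
  unfold concreteDensity
  have h1 : ∀ j, ∀ t : ℝ, 0 ≤ β j / x j ^ t :=
    fun j t => div_nonneg (hβ j).le (Real.rpow_nonneg (hx j) _)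
  have h2 := Finset.sum_nonneg (fun j (_ : j ∈ Finset.univ) => h1 j τ)
  have h3 := Finset.prod_nonneg (fun j (_ : j ∈ Finset.univ) => h1 j (τ + 1))
  have h4 := Real.rpow_nonneg h2 (-(K:ℝ))
  positivity

lemma fillMap_nonneg (n : ℕ) (u : Fin n → ℝ) :
    (∀ j, 0 ≤ fillMap (n+1) u j) ↔ (∀ j, 0 ≤ u j) ∧ ∑ j, u j ≤ 1 := by
  rw [fillMap_eq, Fin.forall_fin_succ']
  simp [addLast]

lemma measurableSet_simp (n : ℕ) :
    MeasurableSet {u : Fin n → ℝ | (∀ j, 0 ≤ u j) ∧ ∑ j, u j ≤ 1} := by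
  apply MeasurableSet.inter
  · have : {u : Fin n → ℝ | ∀ j, 0 ≤ u j} = ⋂ j, {u | 0 ≤ u j} := by ext; simp
    change MeasurableSet {u : Fin n → ℝ | ∀ j, 0 ≤ u j}
    rw [this]
    exact MeasurableSet.iInter (fun j => measurableSet_le measurable_const (measurable_pi_apply j))
  · exact measurableSet_le (f := fun u : Fin n → ℝ => ∑ j, u j) (by fun_prop) measurable_const

lemma ae_simplex (n : ℕ) : ∀ᵐ x ∂(simplexMeasure (n+1)), ∀ j, 0 ≤ x j := by
  unfold simplexMeasure
  rw [ae_map_iff (measurable_fillMap n).aemeasurable]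
  · filter_upwards [ae_restrict_mem (measurableSet_simp n)] with u hu
    exact (fillMap_nonneg n u).2 hu
  · have : {x : Fin (n+1) → ℝ | ∀ j, 0 ≤ x j} = ⋂ j, {u | 0 ≤ u j} := by ext; simp
    rw [this]
    exact MeasurableSet.iInter (fun j => measurableSet_le measurable_const (measurable_pi_apply j))

lemma lint_F (n : ℕ) {τ : ℝ} (hτ : 0 < τ) (β s : Fin (n+1) → ℝ) (hβ : ∀ j, 0 < β j)
    (hs : ∑ j, s j = 0) (hsτ : ∀ j, s j < τ) :
    ∫⁻ x, ENNReal.ofReal ((∏ j, x j ^ s j) * concreteDensity (n+1) β τ x) ∂(simplexMeasure (n+1))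
      = ∏ j, ENNReal.ofReal (β j ^ (s j / τ) * Real.Gamma (1 - s j / τ)) := by
  have hmeas : Measurable (fun x : Fin (n+1) → ℝ =>
      ENNReal.ofReal ((∏ j, x j ^ s j) * concreteDensity (n+1) β τ x)) := by
    have := measurable_density (n+1) β τ
    fun_prop
  have hg := fun j => (measurable_gfun (β j) τ (s j)).ennreal_ofReal
  rw [← Finset.prod_congr rfl (fun j _ => lint_B hτ (hβ j) (hsτ j)), ← lint_C _ _ hg,
    ← lint_D n]
  rotate_left
  · exact Finset.measurable_prod _ (fun j _ => (hg j).comp (measurable_pi_apply j))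
  · intro y hy
    by_contra hne
    rw [Finset.prod_eq_zero_iff] at hne
    apply hy
    refine Finset.sum_pos (fun j _ => ?_) Finset.univ_nonempty
    by_contra hj
    exact hne ⟨j, Finset.mem_univ j, by rw [gfun, if_neg hj, ENNReal.ofReal_zero]⟩
  unfold simplexMeasure
  rw [lintegral_map hmeas (measurable_fillMap n)]
  change ∫⁻ u in {u : Fin n → ℝ | (∀ j, 0 ≤ u j) ∧ ∑ j, u j ≤ 1}, _ = _
  rw [← lintegral_indicator (measurableSet_simp n)]
  refine lintegral_congr (fun u => ?_)
  by_cases hpos : ∀ j, 0 < fillMap (n+1) u j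
  · rw [lint_E n hτ β s _ hβ hs hpos, Set.indicator_of_mem]
    exact (fillMap_nonneg n u).1 (fun j => (hpos j).le)
  · push Not at hpos
    obtain ⟨j, hj⟩ := hpos
    have hR : ∫⁻ S in Set.Ioi (0:ℝ), ENNReal.ofReal (S ^ n) *
        ∏ j, ENNReal.ofReal (gfun (β j) τ (s j) ((S • fillMap (n+1) u) j)) = 0 := by
      rw [setLIntegral_congr_fun (g := fun _ => 0) measurableSet_Ioi, lintegral_zero]
      intro S hS
      have hS' : 0 < S := hS
      have hn : ¬ 0 < (S • fillMap (n+1) u) j := by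
        rw [Pi.smul_apply, smul_eq_mul, not_lt]
        exact mul_nonpos_of_nonneg_of_nonpos hS'.le hj
      simp only
      rw [Finset.prod_eq_zero (Finset.mem_univ j), mul_zero]
      rw [gfun, if_neg hn, ENNReal.ofReal_zero]
    rw [hR]
    by_cases hu : u ∈ {u : Fin n → ℝ | (∀ j, 0 ≤ u j) ∧ ∑ j, u j ≤ 1}
    · rw [Set.indicator_of_mem hu]
      have h0 : fillMap (n+1) u j = 0 := le_antisymm hj ((fillMap_nonneg n u).2 hu j)
      rw [density_zero _ _ hτ _ j h0, mul_zero, ENNReal.ofReal_zero]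
    · rw [Set.indicator_of_notMem hu]

lemma deriv_zero_on {r : ℝ} {F F' : ℝ → ℝ} (h : ∀ t ∈ Set.Ioo (-r) r, HasDerivAt F (F' t) t)
    (h0 : ∀ t ∈ Set.Ioo (-r) r, F t = 0) : ∀ t ∈ Set.Ioo (-r) r, F' t = 0 := by
  intro t ht
  have h1 : HasDerivAt F 0 t := by
    refine (hasDerivAt_const t (0:ℝ)).congr_of_eventuallyEq ?_
    filter_upwards [isOpen_Ioo.mem_nhds ht] with u hu using h0 u hu
  exact (h t ht).unique h1

lemma calc_G {r a c : ℝ} (hr : 0 < r) (ha : a ≠ 0) (M0 M1 M2 M3 : ℝ → ℝ)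
    (h0 : ∀ t ∈ Set.Ioo (-r) r, HasDerivAt M0 (M1 t) t)
    (h1 : ∀ t ∈ Set.Ioo (-r) r, HasDerivAt M1 (M2 t) t)
    (h2 : ∀ t ∈ Set.Ioo (-r) r, HasDerivAt M2 (M3 t) t)
    (hM : M0 0 = 1)
    (hE : ∀ t ∈ Set.Ioo (-r) r, M0 t * Real.sin (a * t) = a * t * Real.exp (c * t)) :
    M1 0 = c ∧ M2 0 = c ^ 2 + a ^ 2 / 3 := by
  have hs : ∀ t : ℝ, HasDerivAt (fun t => Real.sin (a * t)) (Real.cos (a * t) * a) t := fun t => by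
    simpa using ((hasDerivAt_id t).const_mul a).sin
  have hc : ∀ t : ℝ, HasDerivAt (fun t => Real.cos (a * t)) (-Real.sin (a * t) * a) t := fun t => by
    simpa using ((hasDerivAt_id t).const_mul a).cos
  have he : ∀ t : ℝ, HasDerivAt (fun t => Real.exp (c * t)) (Real.exp (c * t) * c) t := fun t => by
    simpa using ((hasDerivAt_id t).const_mul c).exp
  have hl : ∀ p q t : ℝ, HasDerivAt (fun t => p + q * t) q t := fun p q t => by
    simpa using ((hasDerivAt_id t).const_mul q).const_add p
  have d1 := deriv_zero_on (r := r)
    (F := fun t => M0 t * Real.sin (a * t) - (0 + a * t) * Real.exp (c * t))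
    (F' := fun t => M1 t * Real.sin (a * t) + a * (M0 t * Real.cos (a * t))
      - (a + a * c * t) * Real.exp (c * t))
    (fun t ht => by
      exact HasDerivAt.congr_deriv (((h0 t ht).mul (hs t)).sub ((hl 0 a t).mul (he t))) (by ring))
    (fun t ht => by simp [hE t ht])
  have d2 := deriv_zero_on (r := r) 
    (F' := fun t => M2 t * Real.sin (a * t) + 2 * a * (M1 t * Real.cos (a * t))
      - a ^ 2 * (M0 t * Real.sin (a * t))
      - (2 * a * c + a * c ^ 2 * t) * Real.exp (c * t))
    (fun t ht => by
      exact HasDerivAt.congr_deriv ((((h1 t ht).mul (hs t)).add (((h0 t ht).mul (hc t)).const_mul a)).sub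
        ((hl a (a * c) t).mul (he t))) (by ring)) d1
  have d3 := deriv_zero_on (r := r) 
    (F' := fun t => M3 t * Real.sin (a * t) + 3 * a * (M2 t * Real.cos (a * t))
      - 3 * a ^ 2 * (M1 t * Real.sin (a * t)) - a ^ 3 * (M0 t * Real.cos (a * t))
      - (3 * a * c ^ 2 + a * c ^ 3 * t) * Real.exp (c * t))
    (fun t ht => by
      exact HasDerivAt.congr_deriv (((((h2 t ht).mul (hs t)).add (((h1 t ht).mul (hc t)).const_mul (2 * a))).sub
        (((h0 t ht).mul (hs t)).const_mul (a ^ 2))).sub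
        ((hl (2 * a * c) (a * c ^ 2) t).mul (he t))) (by ring)) d2
  have z : (0:ℝ) ∈ Set.Ioo (-r) r := ⟨by linarith, hr⟩
  have e2 := d2 0 z
  have e3 := d3 0 z
  simp [hM] at e2 e3
  constructor
  · have : a * (M1 0 - c) = 0 := by linear_combination e2 / 2
    rcases mul_eq_zero.1 this with h | h
    · exact absurd h ha
    · linarith
  · have : a * (M2 0 - c ^ 2 - a ^ 2 / 3) = 0 := by linear_combination e3 / 3
    rcases mul_eq_zero.1 this with h | h
    · exact absurd h ha
    · linarith

lemma gamma_refl {τ t : ℝ} (hτ : 0 < τ) (ht : t ∈ Set.Ioo (-τ) τ) :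
    Real.Gamma (1 - t / τ) * Real.Gamma (1 + t / τ) * Real.sin (Real.pi / τ * t)
      = Real.pi / τ * t := by
  by_cases h : t = 0
  · simp [h]
  have hz : t / τ ≠ 0 := div_ne_zero h hτ.ne'
  have hlt : t / τ < 1 := (div_lt_one hτ).2 ht.2
  have hgt : -1 < t / τ := by rw [lt_div_iff₀ hτ]; linarith [ht.1]
  have e : Real.pi / τ * t = Real.pi * (t / τ) := by ring
  rw [e]
  have hsin : Real.sin (Real.pi * (t / τ)) ≠ 0 := by
    have hp := Real.pi_pos
    rcases lt_or_gt_of_ne hz with h' | h'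
    · exact (Real.sin_neg_of_neg_of_neg_pi_lt (by nlinarith) (by nlinarith)).ne
    · exact (Real.sin_pos_of_pos_of_lt_pi (by nlinarith) (by nlinarith)).ne'
  have h1 := Real.Gamma_mul_Gamma_one_sub (t / τ)
  rw [add_comm, Real.Gamma_add_one hz]
  rw [eq_div_iff hsin] at h1
  linear_combination (t / τ) * h1

theorem concrete_log_ratio_variance
    (K : ℕ) (hK : 2 ≤ K) (τ : ℝ) (hτ : 0 < τ)
    (β : Fin K → ℝ) (hβ : ∀ i, 0 < β i) (i k : Fin K) :
    (∫ x, Real.log (x i / x k) ^ 2 * concreteDensity K β τ x ∂(simplexMeasure K))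
      - (∫ x, Real.log (x i / x k) * concreteDensity K β τ x ∂(simplexMeasure K)) ^ 2
      = (Real.pi ^ 2 / (3 * τ ^ 2)) * (1 - kd i k) := by
  by_cases hik : i = k
  · subst hik
    have : ∀ y : ℝ, Real.log (y / y) = 0 := by
      intro y
      by_cases hy : y = 0
      · simp [hy]
      · simp [div_self hy]
    simp [this, kd]
  obtain ⟨n, rfl⟩ : ∃ n, K = n + 1 := ⟨K - 1, by omega⟩
  set σ := simplexMeasure (n+1) with hσ
  set f := concreteDensity (n+1) β τ with hf
  have hfm : Measurable f := measurable_density _ _ _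
  have hae : ∀ᵐ x ∂σ, ∀ j, 0 ≤ x j := ae_simplex n
  set μ := σ.withDensity (fun x => ENNReal.ofReal (f x)) with hμ
  set X : (Fin (n+1) → ℝ) → ℝ := fun x => Real.log (x i / x k) with hX
  have hXm : Measurable X := by fun_prop
  have hint : ∀ g : (Fin (n+1) → ℝ) → ℝ, ∫ x, g x ∂μ = ∫ x, g x * f x ∂σ := by
    intro g
    rw [hμ, integral_withDensity_eq_integral_toReal_smul hfm.ennreal_ofReal (by simp)]
    refine integral_congr_ae ?_
    filter_upwards [hae] with x hx
    rw [ENNReal.toReal_ofReal (density_nonneg _ _ hτ hβ x hx), smul_eq_mul, mul_comm]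
  set V : ℝ → ℝ := fun t => (β i ^ (t / τ) * Real.Gamma (1 - t / τ)) *
    (β k ^ (-t / τ) * Real.Gamma (1 - -t / τ)) with hV
  have hVpos : ∀ t ∈ Set.Ioo (-τ) τ, 0 < β i ^ (t / τ) * Real.Gamma (1 - t / τ) := by
    intro t ht
    refine mul_pos (Real.rpow_pos_of_pos (hβ i) _) (Real.Gamma_pos_of_pos ?_)
    rw [sub_pos, div_lt_one hτ]; exact ht.2
  have hl : ∀ t ∈ Set.Ioo (-τ) τ, ∫⁻ x, ENNReal.ofReal (Real.exp (t * X x)) ∂μ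
      = ENNReal.ofReal (V t) := by
    intro t ht
    set s : Fin (n+1) → ℝ := fun j => if j = i then t else if j = k then -t else 0 with hs
    have hsi : s i = t := by simp [hs]
    have hsk : s k = -t := by simp [hs, Ne.symm hik]
    have hso : ∀ j, j ≠ i ∧ j ≠ k → s j = 0 := fun j hj => by simp [hs, hj.1, hj.2]
    have hsum : ∑ j, s j = 0 := by
      rw [Finset.sum_eq_add i k hik (fun j _ hj => hso j hj) (by simp) (by simp), hsi, hsk]
      ring
    have hlt : ∀ j, s j < τ := by
      intro j
      simp only [hs]
      split_ifs
      · exact ht.2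
      · linarith [ht.1]
      · exact hτ
    have hF := lint_F n hτ β s hβ hsum hlt
    rw [Finset.prod_eq_mul i k hik (fun j _ hj => by simp [hso j hj]) (by simp) (by simp),
      hsi, hsk, ← ENNReal.ofReal_mul (hVpos t ht).le] at hF
    rw [hμ, lintegral_withDensity_eq_lintegral_mul _ hfm.ennreal_ofReal (by fun_prop), ← hF]
    refine lintegral_congr_ae ?_
    filter_upwards [hae] with x hx
    by_cases hpos : ∀ j, 0 < x j
    · rw [Pi.mul_apply, mul_comm, ← ENNReal.ofReal_mul (Real.exp_pos _).le]
      congr 2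
      rw [Finset.prod_eq_mul i k hik (fun j _ hj => by simp [hso j hj]) (by simp) (by simp),
        hsi, hsk, Real.rpow_def_of_pos (hpos i), Real.rpow_def_of_pos (hpos k), ← Real.exp_add]
      simp only [hX]
      rw [Real.log_div (hpos i).ne' (hpos k).ne']
      congr 1
      ring
    · push Not at hpos
      obtain ⟨j, hj⟩ := hpos
      have := density_zero _ β hτ x j (le_antisymm hj (hx j))
      simp [hf, this]
  have hVnn : ∀ t ∈ Set.Ioo (-τ) τ, 0 ≤ V t := by
    intro t ht
    refine mul_nonneg (hVpos t ht).le (mul_nonneg (Real.rpow_nonneg (hβ k).le _) 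
      (Real.Gamma_pos_of_pos ?_).le)
    rw [sub_pos, div_lt_one hτ]; linarith [ht.1]
  have hI : ∀ t ∈ Set.Ioo (-τ) τ, Integrable (fun x => Real.exp (t * X x)) μ := by
    intro t ht
    refine ⟨by fun_prop, ?_⟩
    rw [hasFiniteIntegral_iff_ofReal (ae_of_all _ (fun x => (Real.exp_pos _).le)), hl t ht]
    exact ENNReal.ofReal_lt_top
  have hM0 : ∀ t ∈ Set.Ioo (-τ) τ, ∫ x, Real.exp (t * X x) ∂μ = V t := by
    intro t ht
    rw [integral_eq_lintegral_of_nonneg_ae (ae_of_all _ (fun x => (Real.exp_pos _).le))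
      (hI t ht).1, hl t ht, ENNReal.toReal_ofReal (hVnn t ht)]
  have hmem : ∀ t ∈ Set.Ioo (-τ) τ, t ∈ interior (ProbabilityTheory.integrableExpSet X μ) := by
    intro t ht
    exact interior_maximal (fun u hu => hI u hu) isOpen_Ioo ht
  have hD := fun m t ht =>
    ProbabilityTheory.hasDerivAt_integral_pow_mul_exp_real (hmem t ht) m
  have z : (0:ℝ) ∈ Set.Ioo (-τ) τ := ⟨by linarith, hτ⟩
  obtain ⟨r1, r2⟩ := calc_G (r := τ) (a := Real.pi / τ)
    (c := Real.log (β i) / τ - Real.log (β k) / τ) hτ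
    (div_ne_zero Real.pi_ne_zero hτ.ne') _ _ _ _ (hD 0) (hD 1) (hD 2)
    (by
      have := hM0 0 z
      simp only [pow_zero, one_mul]
      rw [this]
      simp [hV])
    (by
      intro t ht
      have := hM0 t ht
      simp only [pow_zero, one_mul]
      rw [this, hV]
      have e1 := gamma_refl hτ ht
      simp only
      rw [show 1 - -t / τ = 1 + t / τ by ring, Real.rpow_def_of_pos (hβ i),
        Real.rpow_def_of_pos (hβ k),
        show (Real.log (β i) / τ - Real.log (β k) / τ) * t
          = Real.log (β i) * (t / τ) + Real.log (β k) * (-t / τ) by ring, Real.exp_add]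
      linear_combination (Real.exp (Real.log (β i) * (t / τ))
        * Real.exp (Real.log (β k) * (-t / τ))) * e1)
  simp only [zero_mul, Real.exp_zero, mul_one, zero_add, pow_one] at r1
  simp only [zero_mul, Real.exp_zero, mul_one] at r2
  rw [hint] at r1 r2
  simp only [hX] at r1 r2
  norm_num at r2
  rw [r1, r2, kd, if_neg hik]
  field_simp
  ring
end

section
/- Let K ≥ 2, τ > 0, and β ∈ ℝ^K with all β_i > 0. Define h(x) = (∑_{j=1}^K β_j/x_j^τ)^{−K} ∏_{i=1}^K x_i^{−(τ+1)}, k(x) = ∑_{j=1}^K β_j/x_j^τ, and J_0 = 1/((K−1)! τ^{K−1} ∏_{i=1}^K β_i). Then for all indices i, k, l, m, n: (K(K+1) β_m β_n / (J_0 (1 + δ_{mn}))) ∫_{S_K} h(x) (log x_i − log x_k)(log x_i − log x_l) / (k(x)² x_m^τ x_n^τ) d^{K−1}x = τ^{−2} [ δ_{imn} + δ_{ilmn} + δ_{ikmn} − δ_{klmn} − δ_{im}δ_{kn} − δ_{im}δ_{ln} − δ_{in}δ_{km} − δ_{in}δ_{lm} + δ_{km}δ_{ln} + δ_{kn}δ_{lm}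 − (2δ_{im} + 2δ_{in} − δ_{km} − δ_{kn} − δ_{lm} − δ_{ln} − δ_{imn} + (1/2)δ_{kmn} + (1/2)δ_{lmn}) log β_i + (δ_{im} + δ_{in} − δ_{km} − δ_{kn} − (1/2)δ_{imn} + (1/2)δ_{kmn}) log β_l + (δ_{im} + δ_{in} − δ_{lm} − δ_{ln} − (1/2)δ_{imn} + (1/2)δ_{lmn}) log β_k + (log β_i − log β_k)(log β_i − log β_l) + (1 − δ_{ik} − δ_{il} + δ_{kl}) π²/6 ], where a Kronecker delta symbol with several indices equals 1 if all its indices are equal and 0 otherwise. -/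
open MeasureTheory Finset

/-- The unnormalized Concrete density `h(x) = (∑_j β_j/x_j^τ)^{-K} ∏_i x_i^{-(τ+1)}`. -/
noncomputable def hfun (K : ℕ) (β : Fin K → ℝ) (τ : ℝ) (x : Fin K → ℝ) : ℝ :=
  (∑ j, β j / x j ^ τ) ^ (-(K : ℝ)) * ∏ i, x i ^ (-(τ + 1))

/-- `k(x) = ∑_j β_j/x_j^τ`. -/
noncomputable def kfun (K : ℕ) (β : Fin K → ℝ) (τ : ℝ) (x : Fin K → ℝ) : ℝ :=
  ∑ j, β j / x j ^ τ

/-- `J_0 = 1/((K−1)! τ^{K−1} ∏_i β_i)`. -/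
noncomputable def J0 (K : ℕ) (β : Fin K → ℝ) (τ : ℝ) : ℝ :=
  1 / ((Nat.factorial (K - 1) : ℝ) * τ ^ (K - 1) * ∏ i, β i)

/-- Log-moments of the Gamma integrand. -/
noncomputable def gA (d : ℕ) (s : ℝ) : ℝ :=
  ∫ t in Set.Ioi (0:ℝ), Real.log t ^ d * (t ^ (s - 1) * Real.exp (-t))

noncomputable def gf (d : ℕ) (t : ℝ) : ℂ := ((Real.log t ^ d * Real.exp (-t) : ℝ) : ℂ)

lemma gf_loc (d : ℕ) : LocallyIntegrableOn (gf d) (Set.Ioi 0) := by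
  apply ContinuousOn.locallyIntegrableOn _ measurableSet_Ioi
  unfold gf
  apply Complex.continuous_ofReal.comp_continuousOn
  apply ContinuousOn.mul
  · apply ContinuousOn.pow
    exact Real.continuousOn_log.mono (fun x hx => ne_of_gt hx)
  · fun_prop

open Asymptotics Filter Topology in
lemma gf_top (d : ℕ) (a : ℝ) : gf d =O[atTop] (fun t : ℝ => t ^ (-a)) := by
  unfold gf
  rw [Complex.isBigO_ofReal_left]
  have h1 : (fun x : ℝ => Real.log x ^ d) =O[atTop] fun x : ℝ => x ^ (1:ℝ) := by
    have := (isLittleO_log_rpow_rpow_atTop (d:ℝ) (one_pos)).isBigO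
    simpa using this
  have h2 := (isLittleO_exp_neg_mul_rpow_atTop one_pos (-a-1)).isBigO
  refine (h1.mul h2).congr' (by simp) ?_
  filter_upwards [eventually_gt_atTop 0] with x hx
  rw [← Real.rpow_add hx]; ring_nf

open Asymptotics Filter Topology in
lemma gf_bot (d : ℕ) (b : ℝ) (hb : 0 < b) : gf d =O[𝓝[>] 0] (fun t : ℝ => t ^ (-b)) := by
  unfold gf
  rw [Complex.isBigO_ofReal_left]
  have h1 : (fun x : ℝ => Real.log x ^ d) =O[𝓝[>] 0] fun x : ℝ => x ^ (-b) := by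
    have := (isLittleO_abs_log_rpow_rpow_nhdsGT_zero (d:ℝ) (neg_lt_zero.2 hb)).isBigO
    have h3 := this.norm_left
    simp only [Real.rpow_natCast, norm_pow, Real.norm_eq_abs, abs_abs] at h3
    refine IsBigO.of_norm_left ?_
    simpa using h3
  have h2 : (fun x : ℝ => Real.exp (-x)) =O[𝓝[>] 0] fun x : ℝ => (1:ℝ) := by
    apply IsBigO.mono _ nhdsWithin_le_nhds
    refine Filter.Tendsto.isBigO_one (F := ℝ) (c := Real.exp (-0)) ?_
    exact (Real.continuous_exp.comp continuous_neg).tendsto 0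
  refine (h1.mul h2).congr' (by simp) (by simp)

lemma gf_int_eq (d : ℕ) (s : ℝ) : ∀ t ∈ Set.Ioi (0:ℝ),
    (t : ℂ) ^ ((s : ℂ) - 1) • gf d t =
      ((Real.log t ^ d * (t ^ (s - 1) * Real.exp (-t)) : ℝ) : ℂ) := by
  intro t ht
  unfold gf
  have : (t : ℂ) ^ ((s : ℂ) - 1) = ((t ^ (s-1) : ℝ) : ℂ) := by
    rw [Complex.ofReal_cpow (le_of_lt ht)]; push_cast; rfl
  rw [this, smul_eq_mul]; push_cast; ring

lemma gA_eq (d : ℕ) (s : ℝ) : mellin (gf d) s = (gA d s : ℂ) := by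
  unfold mellin gA
  rw [setIntegral_congr_fun measurableSet_Ioi (gf_int_eq d s)]
  exact integral_ofReal

lemma gf_succ (d : ℕ) : (fun t => Real.log t • gf d t) = gf (d+1) := by
  funext t
  unfold gf
  rw [Complex.real_smul]; push_cast; ring

lemma gA_integrable (d : ℕ) (s : ℝ) (hs : 0 < s) :
    IntegrableOn (fun t : ℝ => Real.log t ^ d * (t ^ (s - 1) * Real.exp (-t))) (Set.Ioi 0) := by
  have := mellinConvergent_of_isBigO_rpow (s := (s:ℂ)) (gf_loc d) (gf_top d (s+1)) (by simp)
    (gf_bot d (s/2) (by positivity)) (by simp; linarith)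
  unfold MellinConvergent at this
  have h := (this.congr_fun (gf_int_eq d s) measurableSet_Ioi)
  exact h.re

lemma gA_deriv (d : ℕ) (s : ℝ) (hs : 0 < s) : HasDerivAt (gA d) (gA (d+1) s) s := by
  have := (mellin_hasDerivAt_of_isBigO_rpow (s := (s:ℂ)) (gf_loc d) (gf_top d (s+1)) (by simp)
    (gf_bot d (s/2) (by positivity)) (by simp; linarith)).2
  rw [gf_succ] at this
  have h := this.real_of_complex
  simpa [gA_eq] using h

lemma gA_zero (s : ℝ) (hs : 0 < s) : gA 0 s = Real.Gamma s := by
  rw [Real.Gamma_eq_integral hs]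
  unfold gA
  congr 1; funext t; ring

lemma gA_rec0 (s : ℝ) (hs : 0 < s) : gA 0 (s+1) = s * gA 0 s := by
  rw [gA_zero s hs, gA_zero _ (by linarith), Real.Gamma_add_one hs.ne']

lemma gA_rec (d : ℕ) : ∀ (s : ℝ), 0 < s →
    gA (d+1) (s+1) = s * gA (d+1) s + (d+1) * gA d s := by
  induction d with
  | zero =>
    intro s hs
    have h1 := (gA_deriv 0 (s+1) (by linarith)).comp_add_const s 1
    have h2 : HasDerivAt (fun s => s * gA 0 s) (1 * gA 0 s + s * gA 1 s) s :=
      (hasDerivAt_id s).mul (gA_deriv 0 s hs)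
    have h3 : HasDerivAt (fun x => gA 0 (x+1)) (1 * gA 0 s + s * gA 1 s) s := by
      apply h2.congr_of_eventuallyEq
      filter_upwards [lt_mem_nhds hs] with x hx using gA_rec0 x hx
    have := h1.unique h3
    push_cast
    simp only [zero_add] at this ⊢
    linarith
  | succ d ih =>
    intro s hs
    have h1 := (gA_deriv (d+1) (s+1) (by linarith)).comp_add_const s 1
    have h2 := ((hasDerivAt_id s).mul (gA_deriv (d+1) s hs)).add
      ((gA_deriv d s hs).const_mul ((d:ℝ)+1))
    have h3 := h2.congr_of_eventuallyEq (f₁ := fun x => gA (d+1) (x+1)) (by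
      filter_upwards [lt_mem_nhds hs] with x hx using ih x hx)
    have := h1.unique h3
    push_cast
    simp only [id] at this
    linarith

lemma gA_one_zero : gA 0 1 = 1 := by rw [gA_zero 1 one_pos, Real.Gamma_one]

lemma refl_eq (x : ℝ) (h0 : -1 < x) (h1 : x < 1) :
    gA 0 (x + 1) * gA 0 (1 - x) * Real.sin (Real.pi * x) = Real.pi * x := by
  rw [gA_zero _ (by linarith), gA_zero _ (by linarith)]
  rcases eq_or_ne x 0 with rfl | hx
  · simp
  rw [Real.Gamma_add_one hx, mul_assoc x, Real.Gamma_mul_Gamma_one_sub]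
  have : Real.sin (Real.pi * x) ≠ 0 := by
    rw [Real.sin_ne_zero_iff]
    intro n hn
    have h2 : (n : ℝ) = x := by
      have := Real.pi_ne_zero
      apply mul_right_cancel₀ this; rw [hn]; ring
    rw [← h2] at h0 h1 hx
    have a1 : (-1:ℤ) < n := by exact_mod_cast h0
    have a2 : n < 1 := by exact_mod_cast h1
    have : n = 0 := by omega
    simp [this] at hx
  rw [← mul_div_assoc, div_mul_cancel₀ _ this]; ring

lemma gA_var : gA 2 1 - gA 1 1 ^ 2 = Real.pi ^ 2 / 6 := by
  have hp : ∀ d x, -1 < x → HasDerivAt (fun x => gA d (x+1)) (gA (d+1) (x+1)) x := by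
    intro d x hx
    exact (gA_deriv d (x+1) (by linarith)).comp_add_const x 1
  have hm : ∀ d x, x < 1 → HasDerivAt (fun x => gA d (1-x)) (-gA (d+1) (1-x)) x := by
    intro d x hx
    exact (gA_deriv d (1-x) (by linarith)).comp_const_sub 1 x
  have hs : ∀ x, HasDerivAt (fun x => Real.sin (Real.pi * x)) (Real.pi * Real.cos (Real.pi * x)) x := by
    intro x
    have := (Real.hasDerivAt_sin (Real.pi * x)).comp x ((hasDerivAt_id x).const_mul Real.pi)
    convert! this using 1
    simp; ring
  have hc : ∀ x, HasDerivAt (fun x => Real.cos (Real.pi * x)) (-(Real.pi * Real.sin (Real.pi * x))) x := by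
    intro x
    have := (Real.hasDerivAt_cos (Real.pi * x)).comp x ((hasDerivAt_id x).const_mul Real.pi)
    convert! this using 1
    simp; ring
  have hev : ∀ x : ℝ, -1 < x → x < 1 → ∀ᶠ y in nhds x, -1 < y ∧ y < 1 := by
    intro x h0 h1
    filter_upwards [lt_mem_nhds h0, gt_mem_nhds h1] with y a b using ⟨a, b⟩
  have key : ∀ (f g : ℝ → ℝ) (x f' g' : ℝ), -1 < x → x < 1 →
      (∀ y, -1 < y → y < 1 → f y = g y) → HasDerivAt f f' x → HasDerivAt g g' x → f' = g' := by
    intro f g x f' g' h0 h1 hfg hf hg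
    apply hf.unique
    apply hg.congr_of_eventuallyEq
    filter_upwards [hev x h0 h1] with y hy using hfg y hy.1 hy.2
  set F0 : ℝ → ℝ := fun x => gA 0 (x+1) * gA 0 (1-x) with hF0
  set F1 : ℝ → ℝ := fun x => gA 1 (x+1) * gA 0 (1-x) - gA 0 (x+1) * gA 1 (1-x) with hF1
  set F2 : ℝ → ℝ := fun x => gA 2 (x+1) * gA 0 (1-x) - 2 * (gA 1 (x+1) * gA 1 (1-x))
    + gA 0 (x+1) * gA 2 (1-x) with hF2
  have d0 : ∀ x, -1 < x → x < 1 → HasDerivAt F0 (F1 x) x := by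
    intro x h0 h1
    convert! (hp 0 x h0).mul (hm 0 x h1) using 1
    simp only [hF1]; ring
  have d1 : ∀ x, -1 < x → x < 1 → HasDerivAt F1 (F2 x) x := by
    intro x h0 h1
    convert! ((hp 1 x h0).mul (hm 0 x h1)).sub ((hp 0 x h0).mul (hm 1 x h1)) using 1
    simp only [hF2]; ring
  obtain ⟨F3, d2⟩ : ∃ F3, HasDerivAt F2 F3 0 :=
    ⟨_, (((hp 2 0 (by norm_num)).mul (hm 0 0 (by norm_num))).sub
      (((hp 1 0 (by norm_num)).mul (hm 1 0 (by norm_num))).const_mul 2)).add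
      ((hp 0 0 (by norm_num)).mul (hm 2 0 (by norm_num)))⟩
  have e1 : ∀ x, -1 < x → x < 1 →
      F1 x * Real.sin (Real.pi * x) + F0 x * (Real.pi * Real.cos (Real.pi * x)) = Real.pi := by
    intro x h0 h1
    have := key _ _ x _ _ h0 h1 refl_eq ((d0 x h0 h1).mul (hs x))
      ((hasDerivAt_id x).const_mul Real.pi)
    simpa using this
  have e2 : ∀ x, -1 < x → x < 1 →
      F2 x * Real.sin (Real.pi * x) + 2 * (F1 x * (Real.pi * Real.cos (Real.pi * x)))
        + F0 x * (Real.pi * (-(Real.pi * Real.sin (Real.pi * x)))) = 0 := by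
    intro x h0 h1
    have := key _ _ x _ _ h0 h1 e1 (((d1 x h0 h1).mul (hs x)).add
      ((d0 x h0 h1).mul ((hc x).const_mul Real.pi))) (hasDerivAt_const x _)
    linarith
  have n1 : (-1:ℝ) < 0 := by norm_num
  have n2 : (0:ℝ) < 1 := by norm_num
  have e3 := key _ _ 0 _ _ n1 n2 e2 (((d2.mul (hs 0)).add
      (((d1 0 n1 n2).mul ((hc 0).const_mul Real.pi)).const_mul 2)).add
      ((d0 0 n1 n2).mul ((((hs 0).const_mul Real.pi).neg).const_mul Real.pi)))
      (hasDerivAt_const 0 _)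
  have f1 : F1 0 = 0 := by simp [hF1]; ring
  have f0 : F0 0 = 1 := by simp [hF0, gA_one_zero]
  have f2 : F2 0 = 2 * (gA 2 1 - gA 1 1 ^ 2) := by simp [hF2, gA_one_zero]; ring
  rw [f1, f0, f2] at e3
  simp at e3
  have hpi := Real.pi_pos
  have : Real.pi * (6 * (gA 2 1 - gA 1 1 ^ 2) - Real.pi ^ 2) = 0 := by linarith
  rcases mul_eq_zero.1 this with h | h
  · exact absurd h hpi.ne'
  · linarith

/-- The one-dimensional weights. -/
noncomputable def wf (τ b : ℝ) (c d : ℕ) (t : ℝ) : ℝ :=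
  t ^ (-(τ + 1)) * (t ^ τ)⁻¹ ^ c * Real.exp (-(b / t ^ τ)) * Real.log t ^ d

noncomputable def wG (τ b : ℝ) (c d : ℕ) (w : ℝ) : ℝ :=
  ((Real.log b - Real.log w) / τ) ^ d * (w ^ c * Real.exp (-w))

lemma wf_eq (τ b : ℝ) (hτ : 0 < τ) (hb : 0 < b) (c d : ℕ) : ∀ t ∈ Set.Ioi (0:ℝ),
    wf τ b c d t = (τ⁻¹ * b⁻¹ ^ c) *
      ((|-τ| * t ^ (-τ - 1)) • (fun z => wG τ b c d (b * z)) (t ^ (-τ))) := by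
  intro t ht
  have ht' : 0 < t := ht
  have h1 : 0 < t ^ (-τ) := Real.rpow_pos_of_pos ht' _
  unfold wf wG
  simp only [smul_eq_mul]
  rw [Real.log_mul hb.ne' h1.ne', Real.log_rpow ht', abs_neg, abs_of_pos hτ,
    show -(τ+1) = -τ - 1 by ring, ← Real.rpow_neg ht'.le, div_eq_mul_inv b, ← Real.rpow_neg ht'.le]
  have h2 : (Real.log b - (Real.log b + -τ * Real.log t)) / τ = Real.log t := by
    field_simp; ring
  have h3 : b⁻¹ ^ c * b ^ c = 1 := by rw [← mul_pow, inv_mul_cancel₀ hb.ne', one_pow]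
  rw [h2, mul_pow]
  set B := b⁻¹ ^ c
  have hτ0 : τ⁻¹ * τ = 1 := inv_mul_cancel₀ hτ.ne'
  linear_combination (-(τ⁻¹ * τ * t ^ (-τ - 1) * (t ^ (-τ)) ^ c * Real.exp (-(b * t ^ (-τ))) *
    Real.log t ^ d)) * h3 - (t ^ (-τ - 1) * (t ^ (-τ)) ^ c * Real.exp (-(b * t ^ (-τ))) *
    Real.log t ^ d) * hτ0

lemma gA_integrable' (d c : ℕ) : IntegrableOn
    (fun w : ℝ => Real.log w ^ d * (w ^ c * Real.exp (-w))) (Set.Ioi 0) := by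
  have := gA_integrable d (c+1) (by positivity)
  simpa using this

lemma gA_eq' (d c : ℕ) : ∫ w in Set.Ioi (0:ℝ), Real.log w ^ d * (w ^ c * Real.exp (-w)) =
    gA d (c+1) := by
  unfold gA; simp

lemma wG_val (τ b : ℝ) (hτ : 0 < τ) (c : ℕ) (d : ℕ) (hd : d ≤ 2) :
    IntegrableOn (wG τ b c d) (Set.Ioi 0) ∧ ∫ w in Set.Ioi (0:ℝ), wG τ b c d w =
      if d = 0 then gA 0 (c+1) else if d = 1 then
        (Real.log b * gA 0 (c+1) - gA 1 (c+1)) / τ else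
        (Real.log b ^ 2 * gA 0 (c+1) - 2 * Real.log b * gA 1 (c+1) + gA 2 (c+1)) / τ ^ 2 := by
  have i0 := gA_integrable' 0 c
  have i1 := gA_integrable' 1 c
  have i2 := gA_integrable' 2 c
  have hd' : d = 0 ∨ d = 1 ∨ d = 2 := by omega
  have main : ∀ (a0 a1 a2 : ℝ), (∀ w, wG τ b c d w =
      a0 * (Real.log w ^ 0 * (w ^ c * Real.exp (-w))) +
      a1 * (Real.log w ^ 1 * (w ^ c * Real.exp (-w))) +
      a2 * (Real.log w ^ 2 * (w ^ c * Real.exp (-w)))) →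
      IntegrableOn (wG τ b c d) (Set.Ioi 0) ∧ ∫ w in Set.Ioi (0:ℝ), wG τ b c d w =
        a0 * gA 0 (c+1) + a1 * gA 1 (c+1) + a2 * gA 2 (c+1) := by
    intro a0 a1 a2 h
    have h' := funext h
    rw [h']
    refine ⟨((i0.const_mul a0).add (i1.const_mul a1)).add (i2.const_mul a2), ?_⟩
    have hadd := integral_add ((i0.const_mul a0).add (i1.const_mul a1)) (i2.const_mul a2)
    simp only [Pi.add_apply] at hadd
    rw [hadd, integral_add (i0.const_mul a0) (i1.const_mul a1), integral_const_mul, integral_const_mul,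
      integral_const_mul, gA_eq', gA_eq', gA_eq']
  rcases hd' with rfl | rfl | rfl
  · obtain ⟨h1, h2⟩ := main 1 0 0 (by intro w; unfold wG; ring)
    refine ⟨h1, ?_⟩
    rw [h2]; simp
  · obtain ⟨h1, h2⟩ := main (Real.log b / τ) (-1/τ) 0 (by intro w; unfold wG; ring)
    refine ⟨h1, ?_⟩
    rw [h2]; simp; ring
  · obtain ⟨h1, h2⟩ := main (Real.log b ^ 2 / τ ^ 2) (-2 * Real.log b /τ ^ 2) (1 / τ ^ 2)
      (by intro w; unfold wG; ring)
    refine ⟨h1, ?_⟩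
    rw [h2]; simp; ring

noncomputable def mu (c : ℕ) : ℝ := if c = 0 then 0 else if c = 1 then 1 else 3 / 2
noncomputable def qu (c : ℕ) : ℝ := if c = 0 then 0 else if c = 1 then 1 else 5 / 4

noncomputable def eE (τ b : ℝ) (c : ℕ) : ℝ := (Real.log b - gA 1 1 - mu c) / τ
noncomputable def eV (τ : ℝ) (c : ℕ) : ℝ := (Real.pi ^ 2 / 6 - qu c) / τ ^ 2

noncomputable def eR (τ b : ℝ) (c d : ℕ) : ℝ :=
  if d = 0 then 1 else if d = 1 then eE τ b c else eE τ b c ^ 2 + eV τ c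

lemma wf_val (τ b : ℝ) (hτ : 0 < τ) (hb : 0 < b) (c d : ℕ) (hc : c ≤ 2) (hd : d ≤ 2) :
    IntegrableOn (wf τ b c d) (Set.Ioi 0) ∧ ∫ w in Set.Ioi (0:ℝ), wf τ b c d w =
      (τ⁻¹ * b⁻¹ * b⁻¹ ^ c * (Nat.factorial c : ℝ)) * eR τ b c d := by
  obtain ⟨h1, h2⟩ := wG_val τ b hτ c d hd
  have hτ' : -τ ≠ 0 := by linarith
  constructor
  · refine IntegrableOn.congr_fun ?_ (fun t ht => (wf_eq τ b hτ hb c d t ht).symm) measurableSet_Ioi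
    apply Integrable.const_mul
    refine (integrableOn_Ioi_comp_rpow_iff (fun z => wG τ b c d (b * z)) hτ').2 ?_
    rw [integrableOn_Ioi_comp_mul_left_iff _ _ hb, mul_zero]
    exact h1
  · rw [setIntegral_congr_fun measurableSet_Ioi (wf_eq τ b hτ hb c d), integral_const_mul,
      integral_comp_rpow_Ioi (fun z => wG τ b c d (b * z)) hτ', integral_comp_mul_left_Ioi (wG τ b c d) _ hb, mul_zero, h2]
    have r0 := gA_one_zero
    have r01 := gA_rec0 1 one_pos
    have r02 := gA_rec0 2 two_pos
    have r11 := gA_rec 0 1 one_pos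
    have r12 := gA_rec 0 2 two_pos
    have r21 := gA_rec 1 1 one_pos
    have r22 := gA_rec 1 2 two_pos
    have hv := gA_var
    norm_num at r01 r02 r11 r12 r21 r22
    have hv' : gA 2 1 = Real.pi ^ 2 / 6 + gA 1 1 ^ 2 := by linarith
    have hc' : c = 0 ∨ c = 1 ∨ c = 2 := by omega
    have hd' : d = 0 ∨ d = 1 ∨ d = 2 := by omega
    rcases hc' with rfl | rfl | rfl <;> rcases hd' with rfl | rfl | rfl <;>
    norm_num [eR, eE, eV, mu, qu, Nat.factorial, r01, r02, r11, r12, r21, r22, r0, hv'] <;>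
    field_simp <;> ring

lemma fillMap_measurable (K : ℕ) : Measurable (fillMap K) := by
  unfold fillMap
  refine measurable_pi_lambda _ (fun i => ?_)
  by_cases h : (i : ℕ) < K - 1
  · simp only [h, dite_true]; fun_prop
  · simp only [h, dite_false]; fun_prop

instance (K : ℕ) : SFinite (simplexMeasure K) := by
  unfold simplexMeasure; infer_instance

lemma fillMap_sum (N : ℕ) (u : Fin N → ℝ) : ∑ i, fillMap (N+1) u i = 1 := by
  rw [Fin.sum_univ_castSucc]
  simp [fillMap]

lemma fillMap_last (N : ℕ) (u : Fin N → ℝ) : fillMap (N+1) u (Fin.last N) = 1 - ∑ j, u j := by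
  simp [fillMap]

lemma fillMap_castSucc (N : ℕ) (u : Fin N → ℝ) (j : Fin N) :
    fillMap (N+1) u (Fin.castSucc j) = u j := by
  simp [fillMap]

/-- The affine map used for polar decomposition. -/
noncomputable def insMap (N : ℕ) (t : ℝ) (u : Fin N → ℝ) : Fin (N+1) → ℝ :=
  (MeasurableEquiv.piFinSuccAbove (fun _ => ℝ) (Fin.last N)).symm (t, u)

lemma insMap_last (N : ℕ) (t : ℝ) (u : Fin N → ℝ) : insMap N t u (Fin.last N) = t := by
  simp [insMap, MeasurableEquiv.piFinSuccAbove]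

lemma insMap_castSucc (N : ℕ) (t : ℝ) (u : Fin N → ℝ) (j : Fin N) :
    insMap N t u (Fin.castSucc j) = u j := by
  rw [← Fin.succAbove_last_apply]
  simp [insMap, MeasurableEquiv.piFinSuccAbove]

lemma insMap_smul (N : ℕ) (s : ℝ) (u : Fin N → ℝ) :
    insMap N (s - ∑ j, (s • u) j) (s • u) = s • fillMap (N+1) u := by
  funext i
  refine Fin.lastCases ?_ (fun j => ?_) i
  · rw [insMap_last, Pi.smul_apply, fillMap_last]
    simp only [Pi.smul_apply, smul_eq_mul, ← Finset.mul_sum]; ring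
  · rw [insMap_castSucc, Pi.smul_apply, Pi.smul_apply, fillMap_castSucc]

lemma insMap_measurable (N : ℕ) : Measurable (fun p : ℝ × (Fin N → ℝ) => insMap N p.1 p.2) :=
  (MeasurableEquiv.piFinSuccAbove (fun _ => ℝ) (Fin.last N)).symm.measurable

def orth (K : ℕ) : Set (Fin K → ℝ) := {y | ∀ i, 0 ≤ y i}

lemma orth_meas (K : ℕ) : MeasurableSet (orth K) := by
  have : orth K = ⋂ i, {y | 0 ≤ y i} := by ext; simp [orth]
  rw [this]
  exact MeasurableSet.iInter fun i => measurableSet_le measurable_const (measurable_pi_apply i)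

lemma fill_mem (N : ℕ) (u : Fin N → ℝ) :
    fillMap (N+1) u ∈ orth (N+1) ↔ (∀ j, 0 ≤ u j) ∧ ∑ j, u j ≤ 1 := by
  unfold orth
  constructor
  · intro h
    refine ⟨fun j => ?_, ?_⟩
    · rw [← fillMap_castSucc N u j]; exact h _
    · have := h (Fin.last N); rw [fillMap_last] at this; linarith
  · rintro ⟨h1, h2⟩ i
    refine Fin.lastCases ?_ (fun j => ?_) i
    · rw [fillMap_last]; linarith
    · rw [fillMap_castSucc]; exact h1 j

lemma lintegral_smul_fin (N : ℕ) (H : (Fin N → ℝ) → ENNReal) (hH : Measurable H) (s : ℝ)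
    (hs : 0 < s) : ∫⁻ u, H u = ENNReal.ofReal (s ^ N) * ∫⁻ u, H (s • u) := by
  have h := Measure.map_addHaar_smul (volume : Measure (Fin N → ℝ)) hs.ne'
  have h2 : ∫⁻ u, H (s • u) = ∫⁻ u, H u ∂(Measure.map (fun x => s • x) volume) := by
    rw [lintegral_map hH (by fun_prop)]
  rw [h2, h, lintegral_smul_measure, smul_eq_mul, ← mul_assoc, ← ENNReal.ofReal_mul (by positivity)]
  simp only [Module.finrank_fintype_fun_eq_card, Fintype.card_fin]
  rw [abs_of_pos (by positivity), mul_inv_cancel₀ (by positivity)]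
  simp

lemma polar_lintegral (N : ℕ) (F : (Fin (N+1) → ℝ) → ENNReal) (hF : Measurable F) :
    ∫⁻ y in orth (N+1), F y = ∫⁻ s in Set.Ioi (0:ℝ), ENNReal.ofReal (s ^ N) *
      ∫⁻ x, F (s • x) ∂(simplexMeasure (N+1)) := by
  set G := (orth (N+1)).indicator F with hG
  have hGm : Measurable G := hF.indicator (orth_meas _)
  rw [← lintegral_indicator (orth_meas _)]
  have e1 : ∫⁻ y, G y = ∫⁻ p : ℝ × (Fin N → ℝ), G (insMap N p.1 p.2) := by
    have := (volume_preserving_piFinSuccAbove (fun _ : Fin (N+1) => ℝ) (Fin.last N)).symm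
    exact (this.lintegral_comp hGm).symm
  have hGi : Measurable (fun p : ℝ × (Fin N → ℝ) => G (insMap N p.1 p.2)) :=
    hGm.comp (insMap_measurable N)
  have hGs : Measurable (fun p : (Fin N → ℝ) × ℝ => G (insMap N (p.2 - ∑ j, p.1 j) p.1)) := by
    have : Measurable (fun p : (Fin N → ℝ) × ℝ => (p.2 - ∑ j, p.1 j, p.1)) := by fun_prop
    exact hGi.comp this
  have e2 : ∫⁻ p : ℝ × (Fin N → ℝ), G (insMap N p.1 p.2) =
      ∫⁻ u : Fin N → ℝ, ∫⁻ s : ℝ, G (insMap N (s - ∑ j, u j) u) := by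
    rw [Measure.volume_eq_prod, lintegral_prod_symm _ hGi.aemeasurable]
    congr 1; funext u
    simp only [sub_eq_add_neg]
    exact (lintegral_add_right_eq_self (fun t => G (insMap N t u)) _).symm
  rw [e1, e2, lintegral_lintegral_swap hGs.aemeasurable, ← lintegral_indicator measurableSet_Ioi]
  apply lintegral_congr_ae
  have h0 : ∀ᵐ s : ℝ, s ≠ 0 := by
    simp [ae_iff]
  filter_upwards [h0] with s hs0
  have hGu : Measurable (fun u : Fin N → ℝ => G (insMap N (s - ∑ j, u j) u)) :=
    hGs.comp (measurable_prodMk_right (y := s))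
  rcases lt_or_gt_of_ne hs0 with hs | hs
  · rw [Set.indicator_of_notMem (by simp [hs.le])]
    rw [lintegral_eq_zero_iff hGu]
    refine Filter.Eventually.of_forall (fun u => ?_)
    simp only [hG]
    apply Set.indicator_of_notMem
    intro hmem
    have hsum : ∑ i, insMap N (s - ∑ j, u j) u i = s := by
      rw [Fin.sum_univ_castSucc, insMap_last]
      simp [insMap_castSucc]
    have : 0 ≤ ∑ i, insMap N (s - ∑ j, u j) u i := Finset.sum_nonneg (fun i _ => hmem i)
    linarith
  · rw [Set.indicator_of_mem (by exact hs)]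
    rw [lintegral_smul_fin N _ hGu s hs]
    congr 1
    unfold simplexMeasure
    rw [lintegral_map (by fun_prop) (fillMap_measurable _)]
    have hset : {u : Fin N → ℝ | (∀ j, 0 ≤ u j) ∧ ∑ j, u j ≤ 1} = fillMap (N+1) ⁻¹' orth (N+1) := by
      ext u; exact (fill_mem N u).symm
    have hset2 : MeasurableSet {u : Fin N → ℝ | (∀ j, 0 ≤ u j) ∧ ∑ j, u j ≤ 1} := by
      rw [hset]; exact (fillMap_measurable _) (orth_meas _)
    change _ = ∫⁻ u in {u : Fin N → ℝ | (∀ j, 0 ≤ u j) ∧ ∑ j, u j ≤ 1},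
      F (s • fillMap (N+1) u)
    rw [← lintegral_indicator hset2, hset]
    congr 1; funext u
    have e3 := insMap_smul N s u
    simp only [hG, Function.comp]
    rw [e3]
    have hiff : s • fillMap (N+1) u ∈ orth (N+1) ↔ u ∈ fillMap (N+1) ⁻¹' orth (N+1) := by
      simp only [orth, Set.mem_preimage, Set.mem_setOf_eq, Pi.smul_apply, smul_eq_mul]
      exact forall_congr' fun i => ⟨fun h => nonneg_of_mul_nonneg_right h hs, fun h => mul_nonneg hs.le h⟩
    by_cases hu : u ∈ fillMap (N+1) ⁻¹' orth (N+1)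
    · rw [Set.indicator_of_mem (hiff.2 hu), Set.indicator_of_mem hu]
    · rw [Set.indicator_of_notMem (fun h => hu (hiff.1 h)), Set.indicator_of_notMem hu]

/-- radial measure -/
noncomputable def radM (N : ℕ) : Measure ℝ :=
  (volume.restrict (Set.Ioi (0:ℝ))).withDensity (fun s => ENNReal.ofReal (s ^ N))

instance (N : ℕ) : SFinite (radM N) := by unfold radM; infer_instance

lemma smul_meas (K : ℕ) : Measurable (fun p : ℝ × (Fin K → ℝ) => p.1 • p.2) := by fun_prop

lemma polar_measure (N : ℕ) : (volume : Measure (Fin (N+1) → ℝ)).restrict (orth (N+1)) =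
    Measure.map (fun p : ℝ × (Fin (N+1) → ℝ) => p.1 • p.2)
      ((radM N).prod (simplexMeasure (N+1))) := by
  apply Measure.ext_of_lintegral
  intro F hF
  have hFm : Measurable (fun p : ℝ × (Fin (N+1) → ℝ) => F (p.1 • p.2)) := hF.comp (smul_meas _)
  rw [polar_lintegral N F hF, lintegral_map hF (smul_meas _),
    lintegral_prod _ hFm.aemeasurable]
  unfold radM
  rw [lintegral_withDensity_eq_lintegral_mul _ (by fun_prop) hFm.lintegral_prod_right']
  rfl

lemma orth_pi (K : ℕ) : (volume : Measure (Fin K → ℝ)).restrict (orth K) =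
    Measure.pi (fun _ => volume.restrict (Set.Ioi (0:ℝ))) := by
  have h1 : orth K = Set.univ.pi (fun _ => Set.Ici (0:ℝ)) := by ext; simp [orth, Pi.le_def]
  rw [h1, volume_pi, Measure.restrict_pi_pi]
  congr 1; funext _; exact (restrict_Ioi_eq_restrict_Ici).symm

lemma simplex_pos (N : ℕ) : ∀ᵐ x ∂(simplexMeasure (N+1)), ∀ i, 0 < x i := by
  rw [ae_all_iff]
  intro i
  have h1 : ∀ᵐ y ∂((volume : Measure (Fin (N+1) → ℝ)).restrict (orth (N+1))), y i ≠ 0 := by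
    apply ae_restrict_of_ae
    rw [ae_iff]
    simp only [not_not]
    exact Measure.pi_hyperplane _ i 0
  have hm : MeasurableSet {y : Fin (N+1) → ℝ | y i ≠ 0} :=
    (measurableSet_eq_fun (measurable_pi_apply i) measurable_const).compl
  rw [polar_measure, ae_map_iff (smul_meas _).aemeasurable hm] at h1
  have h2 := Measure.ae_ae_of_ae_prod h1
  have h3 : ∃ s : ℝ, ∀ᵐ x ∂(simplexMeasure (N+1)), (s • x) i ≠ 0 := by
    have : NeZero (radM N) := by
      constructor
      unfold radM
      intro h
      rw [withDensity_eq_zero_iff (by fun_prop)] at h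
      have h5 := (ae_restrict_iff' measurableSet_Ioi).1 h
      have h6 : volume (Set.Ioi (0:ℝ)) = 0 := by
        refine measure_mono_null ?_ h5
        intro s hs
        simp only [Set.mem_compl_iff, Set.mem_ofPred_eq, not_forall]
        refine ⟨hs, ?_⟩
        have : 0 < s ^ N := pow_pos hs N
        simp [this]
      simp at h6
    exact h2.exists
  obtain ⟨s, hs⟩ := h3
  have h4 : ∀ᵐ x ∂(simplexMeasure (N+1)), 0 ≤ x i := by
    unfold simplexMeasure
    rw [ae_map_iff (fillMap_measurable _).aemeasurable
      (measurableSet_le measurable_const (measurable_pi_apply i))]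
    have hms : MeasurableSet {u : Fin N → ℝ | (∀ j, 0 ≤ u j) ∧ ∑ j, u j ≤ 1} := by
      have hset : {u : Fin N → ℝ | (∀ j, 0 ≤ u j) ∧ ∑ j, u j ≤ 1} =
          fillMap (N+1) ⁻¹' orth (N+1) := by
        ext u; exact (fill_mem N u).symm
      rw [hset]; exact (fillMap_measurable _) (orth_meas _)
    refine (ae_restrict_iff' hms).2 (Filter.Eventually.of_forall (fun u hu => ?_))
    exact (fill_mem N u).2 hu i
  filter_upwards [hs, h4] with x hx hx'
  refine lt_of_le_of_ne hx' (fun h => hx ?_)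
  simp [← h]

lemma polar_integral (N : ℕ) (F : (Fin (N+1) → ℝ) → ℝ)
    (hF : Integrable F (Measure.pi (fun _ => volume.restrict (Set.Ioi (0:ℝ))))) :
    ∫ y, F y ∂(Measure.pi (fun _ => volume.restrict (Set.Ioi (0:ℝ)))) =
      ∫ x, (∫ s in Set.Ioi (0:ℝ), s ^ N * F (s • x)) ∂(simplexMeasure (N+1)) := by
  rw [← orth_pi, polar_measure] at hF ⊢
  rw [integral_map (smul_meas _).aemeasurable hF.1]
  have hF2 : Integrable (fun p : ℝ × (Fin (N+1) → ℝ) => F (p.1 • p.2))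
    ((radM N).prod (simplexMeasure (N+1))) := (integrable_map_measure hF.1 (smul_meas _).aemeasurable).1 hF
  rw [integral_prod_symm _ hF2]
  congr 1; funext x
  unfold radM
  rw [integral_withDensity_eq_integral_toReal_smul (by fun_prop)
    (Filter.Eventually.of_forall (fun _ => ENNReal.ofReal_lt_top))]
  refine setIntegral_congr_fun measurableSet_Ioi (fun s hs => ?_)
  have hs' : (0:ℝ) < s := hs
  simp only
  rw [ENNReal.toReal_ofReal (by positivity), smul_eq_mul]

/-- Exponent shifts. -/
def cc {K : ℕ} (m n j : Fin K) : ℕ := (if j = m then 1 else 0) + (if j = n then 1 else 0)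

lemma cc_le {K : ℕ} (m n j : Fin K) : cc m n j ≤ 2 := by
  unfold cc; split_ifs <;> omega

lemma prod_cc {K : ℕ} (f : Fin K → ℝ) (m n : Fin K) : ∏ j, f j ^ cc m n j = f m * f n := by
  unfold cc
  simp only [pow_add, Finset.prod_mul_distrib, pow_ite, pow_one, pow_zero]
  simp

noncomputable def bigW {K : ℕ} (β : Fin K → ℝ) (τ : ℝ) (m n : Fin K) (y : Fin K → ℝ) : ℝ :=
  (∏ j, y j ^ (-(τ + 1))) * ((y m ^ τ)⁻¹ * (y n ^ τ)⁻¹) * Real.exp (-(kfun K β τ y))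

lemma prod_wf {K : ℕ} (β : Fin K → ℝ) (τ : ℝ) (m n a b : Fin K) (y : Fin K → ℝ) :
    ∏ j, wf τ (β j) (cc m n j) (cc a b j) (y j) =
      bigW β τ m n y * (Real.log (y a) * Real.log (y b)) := by
  unfold wf bigW kfun
  simp only [Finset.prod_mul_distrib]
  rw [prod_cc (fun j => Real.log (y j)), prod_cc (fun j => (y j ^ τ)⁻¹), ← Real.exp_sum,
    Finset.sum_neg_distrib]

lemma prod_eR {K : ℕ} (β : Fin K → ℝ) (τ : ℝ) (c : Fin K → ℕ) (a b : Fin K) :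
    ∏ j, eR τ (β j) (c j) (cc a b j) =
      eE τ (β a) (c a) * eE τ (β b) (c b) + kd a b * eV τ (c a) := by
  by_cases hab : a = b
  · subst hab
    rw [Finset.prod_eq_single a]
    · simp [cc, eR, kd]; ring
    · intro j _ hj; simp [cc, eR, hj]
    · simp
  · rw [Finset.prod_eq_mul a b hab]
    · simp [cc, eR, kd, hab, Ne.symm hab]
    · intro j _ hj; simp [cc, eR, hj.1, hj.2]
    · simp
    · simp

noncomputable def nuK (K : ℕ) : Measure (Fin K → ℝ) :=
  Measure.pi (fun _ => volume.restrict (Set.Ioi (0:ℝ)))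

noncomputable def Nn {K : ℕ} (β : Fin K → ℝ) (τ : ℝ) (m n : Fin K) : ℝ :=
  ∏ j, (τ⁻¹ * (β j)⁻¹ * (β j)⁻¹ ^ cc m n j * (Nat.factorial (cc m n j) : ℝ))

lemma Nn_eq {K : ℕ} (β : Fin K → ℝ) (τ : ℝ) (m n : Fin K) :
    Nn β τ m n = τ⁻¹ ^ K * (∏ j, β j)⁻¹ * ((β m)⁻¹ * (β n)⁻¹) * (1 + kd m n) := by
  unfold Nn
  simp only [Finset.prod_mul_distrib]
  rw [prod_cc (fun j => (β j)⁻¹), Finset.prod_inv_distrib]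
  have : ∏ j, ((cc m n j).factorial : ℝ) = 1 + kd m n := by
    by_cases h : m = n
    · subst h
      rw [Finset.prod_eq_single m]
      · simp [cc, kd, Nat.factorial]; norm_num
      · intro j _ hj; simp [cc, hj]
      · simp
    · rw [Finset.prod_eq_one]
      · simp [kd, h]
      · intro j _
        have : cc m n j = 0 ∨ cc m n j = 1 := by
          unfold cc
          split_ifs with h1 h2 <;> simp_all
        rcases this with h | h <;> simp [h]
  rw [this]
  simp

lemma Fab {K : ℕ} (β : Fin K → ℝ) (hβ : ∀ i, 0 < β i) (τ : ℝ) (hτ : 0 < τ) (m n a b : Fin K) :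
    Integrable (fun y => bigW β τ m n y * (Real.log (y a) * Real.log (y b))) (nuK K) ∧
    ∫ y, bigW β τ m n y * (Real.log (y a) * Real.log (y b)) ∂(nuK K) = Nn β τ m n *
      (eE τ (β a) (cc m n a) * eE τ (β b) (cc m n b) + kd a b * eV τ (cc m n a)) := by
  have hj := fun j => wf_val τ (β j) hτ (hβ j) (cc m n j) (cc a b j) (cc_le _ _ _) (cc_le _ _ _)
  simp only [← prod_wf]
  unfold nuK
  constructor
  · exact Integrable.fintype_prod (f := fun j t => wf τ (β j) (cc m n j) (cc a b j) t)
      (fun j => (hj j).1)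
  · rw [integral_fintype_prod_eq_prod (fun j t => wf τ (β j) (cc m n j) (cc a b j) t),
      Finset.prod_congr rfl (fun j _ => (hj j).2), Finset.prod_mul_distrib, prod_eR]
    rfl

lemma Ftot {K : ℕ} (β : Fin K → ℝ) (hβ : ∀ i, 0 < β i) (τ : ℝ) (hτ : 0 < τ) (i k l m n : Fin K) :
    Integrable (fun y => bigW β τ m n y * ((Real.log (y i) - Real.log (y k)) *
      (Real.log (y i) - Real.log (y l)))) (nuK K) ∧
    ∫ y, bigW β τ m n y * ((Real.log (y i) - Real.log (y k)) *
      (Real.log (y i) - Real.log (y l))) ∂(nuK K) = Nn β τ m n *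
      ((eE τ (β i) (cc m n i) - eE τ (β k) (cc m n k)) *
        (eE τ (β i) (cc m n i) - eE τ (β l) (cc m n l))
        + (1 - kd i l - kd i k) * eV τ (cc m n i) + kd k l * eV τ (cc m n k)) := by
  obtain ⟨a1, b1⟩ := Fab β hβ τ hτ m n i i
  obtain ⟨a2, b2⟩ := Fab β hβ τ hτ m n i l
  obtain ⟨a3, b3⟩ := Fab β hβ τ hτ m n i k
  obtain ⟨a4, b4⟩ := Fab β hβ τ hτ m n k l
  have e : (fun y : Fin K → ℝ => bigW β τ m n y * ((Real.log (y i) - Real.log (y k)) *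
      (Real.log (y i) - Real.log (y l)))) = fun y =>
      (bigW β τ m n y * (Real.log (y i) * Real.log (y i)) -
      bigW β τ m n y * (Real.log (y i) * Real.log (y l))) -
      (bigW β τ m n y * (Real.log (y i) * Real.log (y k)) -
      bigW β τ m n y * (Real.log (y k) * Real.log (y l))) := by
    funext y; ring
  rw [e]
  refine ⟨(a1.sub a2).sub (a3.sub a4), ?_⟩
  have s1 := integral_sub (a1.sub a2) (a3.sub a4)
  simp only [Pi.sub_apply] at s1
  rw [s1, integral_sub a1 a2, integral_sub a3 a4, b1, b2, b3, b4]
  have hii : kd i i = 1 := by simp [kd]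
  rw [hii]
  ring

lemma radial (N : ℕ) (β : Fin (N+1) → ℝ) (hβ : ∀ i, 0 < β i) (τ : ℝ) (hτ : 0 < τ)
    (i k l m n : Fin (N+1)) (x : Fin (N+1) → ℝ) (hx : ∀ i, 0 < x i) :
    ∫ s in Set.Ioi (0:ℝ), s ^ N * (bigW β τ m n (s • x) *
      ((Real.log ((s • x) i) - Real.log ((s • x) k)) *
      (Real.log ((s • x) i) - Real.log ((s • x) l)))) =
    (Nat.factorial (N+2) : ℝ) * τ⁻¹ * (hfun (N+1) β τ x * (Real.log (x i) - Real.log (x k)) *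
            (Real.log (x i) - Real.log (x l)) /
          (kfun (N+1) β τ x ^ 2 * x m ^ τ * x n ^ τ)) := by
  have hτ' : -τ ≠ 0 := by linarith
  have hk : 0 < kfun (N+1) β τ x := by
    unfold kfun
    apply Finset.sum_pos
    · intro j _; exact div_pos (hβ j) (Real.rpow_pos_of_pos (hx j) _)
    · exact Finset.univ_nonempty
  set κ := kfun (N+1) β τ x with hκ
  set C := (∏ j, x j ^ (-(τ + 1))) * ((x m ^ τ)⁻¹ * (x n ^ τ)⁻¹) *
    ((Real.log (x i) - Real.log (x k)) * (Real.log (x i) - Real.log (x l))) with hC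
  have key : ∀ s ∈ Set.Ioi (0:ℝ), s ^ N * (bigW β τ m n (s • x) *
      ((Real.log ((s • x) i) - Real.log ((s • x) k)) *
      (Real.log ((s • x) i) - Real.log ((s • x) l)))) = (τ⁻¹ * C) *
      ((|-τ| * s ^ (-τ - 1)) • (fun z : ℝ => z ^ ((N+3:ℝ) - 1) * Real.exp (-(κ * z))) (s ^ (-τ))) := by
    intro s hs
    have hs' : 0 < s := hs
    have hk2 : kfun (N+1) β τ (s • x) = κ * s ^ (-τ) := by
      rw [hκ]; unfold kfun
      rw [Finset.sum_mul]
      refine Finset.sum_congr rfl (fun j _ => ?_)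
      rw [Pi.smul_apply, smul_eq_mul, Real.mul_rpow hs'.le (hx j).le, Real.rpow_neg hs'.le]
      have := Real.rpow_pos_of_pos (hx j) τ
      have := Real.rpow_pos_of_pos hs' τ
      field_simp
    have hp : ∏ j, (s • x) j ^ (-(τ+1)) = (s ^ (-(τ+1))) ^ (N+1) * ∏ j, x j ^ (-(τ+1)) := by
      simp only [Pi.smul_apply, smul_eq_mul]
      rw [Finset.prod_congr rfl (fun j _ => Real.mul_rpow hs'.le (hx j).le),
        Finset.prod_mul_distrib]
      simp
    have hl : ∀ a b : Fin (N+1), Real.log ((s • x) a) - Real.log ((s • x) b) =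
        Real.log (x a) - Real.log (x b) := by
      intro a b
      simp only [Pi.smul_apply, smul_eq_mul]
      rw [Real.log_mul hs'.ne' (hx a).ne', Real.log_mul hs'.ne' (hx b).ne']; ring
    have hinv : ∀ a : Fin (N+1), ((s • x) a ^ τ)⁻¹ = s ^ (-τ) * (x a ^ τ)⁻¹ := by
      intro a
      rw [Pi.smul_apply, smul_eq_mul, Real.mul_rpow hs'.le (hx a).le, mul_inv, Real.rpow_neg hs'.le]
    unfold bigW
    rw [hk2, hp, hl, hl, hinv, hinv, hC, abs_neg, abs_of_pos hτ]
    simp only [smul_eq_mul]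
    have hpow : s ^ N * (s ^ (-(τ+1))) ^ (N+1) * (s ^ (-τ)) ^ 2 =
        s ^ (-τ - 1) * (s ^ (-τ)) ^ ((N+3:ℝ) - 1) := by
      rw [← Real.rpow_natCast s N, ← Real.rpow_natCast _ (N+1), ← Real.rpow_natCast _ 2,
        ← Real.rpow_mul hs'.le, ← Real.rpow_mul hs'.le, ← Real.rpow_mul hs'.le,
        ← Real.rpow_add hs', ← Real.rpow_add hs', ← Real.rpow_add hs']
      congr 1
      push_cast; ring
    have hτ0 : τ⁻¹ * τ = 1 := inv_mul_cancel₀ hτ.ne'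
    generalize ∏ j, x j ^ (-(τ+1)) = P
    generalize (x m ^ τ)⁻¹ = P1
    generalize (x n ^ τ)⁻¹ = P2
    generalize Real.exp (-(κ * s ^ (-τ))) = P3
    generalize Real.log (x i) - Real.log (x k) = P4
    generalize Real.log (x i) - Real.log (x l) = P5
    linear_combination (P * P1 * P2 * P3 * P4 * P5) * hpow -
      (s ^ (-τ - 1) * (s ^ (-τ)) ^ ((N+3:ℝ) - 1) * P * P1 * P2 * P3 * P4 * P5) * hτ0
  rw [setIntegral_congr_fun measurableSet_Ioi key, integral_const_mul,
    integral_comp_rpow_Ioi (fun z : ℝ => z ^ ((N+3:ℝ) - 1) * Real.exp (-(κ * z))) hτ',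
    Real.integral_rpow_mul_exp_neg_mul_Ioi (by positivity) hk]
  have hG : Real.Gamma (N+3:ℝ) = (Nat.factorial (N+2) : ℝ) := by
    rw [← Real.Gamma_nat_eq_factorial]; congr 1; push_cast; ring
  have hpw : (1/κ) ^ (N+3:ℝ) = (κ ^ (N+1))⁻¹ * (κ ^ 2)⁻¹ := by
    rw [show (N+3:ℝ) = ((N+3:ℕ):ℝ) by push_cast; ring, Real.rpow_natCast, ← mul_inv, ← pow_add,
      one_div, inv_pow]
  have hh : hfun (N+1) β τ x = (κ ^ (N+1))⁻¹ * ∏ j, x j ^ (-(τ+1)) := by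
    unfold hfun
    change κ ^ (-((N+1:ℕ):ℝ)) * _ = _
    rw [Real.rpow_neg hk.le, Real.rpow_natCast]
  rw [hG, hpw, hh, hC]
  rw [div_eq_mul_inv, mul_inv, mul_inv]
  ring

lemma mu_cc {K : ℕ} (m n j : Fin K) : mu (cc m n j) = kd j m + kd j n - (1/2) * (kd j m * kd j n) := by
  unfold mu cc kd; split_ifs <;> norm_num at *

lemma qu_cc {K : ℕ} (m n j : Fin K) : qu (cc m n j) = kd j m + kd j n - (3/4) * (kd j m * kd j n) := by
  unfold qu cc kd; split_ifs <;> norm_num at *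

lemma const_id {K : ℕ} (i k l m n : Fin K) :
    ((kd i m + kd i n - (1/2) * (kd i m * kd i n)) - (kd k m + kd k n - (1/2) * (kd k m * kd k n))) *
    ((kd i m + kd i n - (1/2) * (kd i m * kd i n)) - (kd l m + kd l n - (1/2) * (kd l m * kd l n)))
    - (1 - kd i l - kd i k) * (kd i m + kd i n - (3/4) * (kd i m * kd i n))
    - kd k l * (kd k m + kd k n - (3/4) * (kd k m * kd k n)) =
    kd i m * kd i n + kd i l * kd i m * kd i n + kd i k * kd i m * kd i n
            - kd k l * kd k m * kd k n
            - kd i m * kd k n - kd i m * kd l n - kd i n * kd k m - kd i n * kd l m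
            + kd k m * kd l n + kd k n * kd l m := by
  unfold kd
  split_ifs <;> first | (exfalso; grind) | norm_num

/-- Raw log-ratio second moments `E[log(X_i/X_k) log(X_i/X_l)]` of the inverse
Schlömilch distribution `IS(1 + e_m + e_n, β, τ)`.  (A Kronecker delta with several
indices, e.g. `δ_{imn} = kd i m * kd i n`, equals 1 iff all its indices coincide.) -/
theorem is_special_raw_second_moment
    (K : ℕ) (hK : 2 ≤ K) (τ : ℝ) (hτ : 0 < τ)
    (β : Fin K → ℝ) (hβ : ∀ i, 0 < β i) (i k l m n : Fin K) :
    ((K : ℝ) * ((K : ℝ) + 1) * β m * β n / (J0 K β τ * (1 + kd m n))) *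
      ∫ x, hfun K β τ x * (Real.log (x i) - Real.log (x k)) *
            (Real.log (x i) - Real.log (x l)) /
          (kfun K β τ x ^ 2 * x m ^ τ * x n ^ τ) ∂(simplexMeasure K)
      = τ⁻¹ ^ 2 *
          (kd i m * kd i n + kd i l * kd i m * kd i n + kd i k * kd i m * kd i n
            - kd k l * kd k m * kd k n
            - kd i m * kd k n - kd i m * kd l n - kd i n * kd k m - kd i n * kd l m
            + kd k m * kd l n + kd k n * kd l m
            - (2 * kd i m + 2 * kd i n - kd k m - kd k n - kd l m - kd l n
                - kd i m * kd i n + (1 / 2) * (kd k m * kd k n)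
                + (1 / 2) * (kd l m * kd l n)) * Real.log (β i)
            + (kd i m + kd i n - kd k m - kd k n - (1 / 2) * (kd i m * kd i n)
                + (1 / 2) * (kd k m * kd k n)) * Real.log (β l)
            + (kd i m + kd i n - kd l m - kd l n - (1 / 2) * (kd i m * kd i n)
                + (1 / 2) * (kd l m * kd l n)) * Real.log (β k)
            + (Real.log (β i) - Real.log (β k)) * (Real.log (β i) - Real.log (β l))
            + (1 - kd i k - kd i l + kd k l) * Real.pi ^ 2 / 6) := by
  obtain ⟨N, rfl⟩ : ∃ N, K = N + 1 := ⟨K - 1, by omega⟩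
  obtain ⟨hI, hv⟩ := Ftot β hβ τ hτ i k l m n
  have hpol := polar_integral N _ hI
  have hrad := integral_congr_ae ((simplex_pos N).mono
    (fun x hx => radial N β hβ τ hτ i k l m n x hx))
  rw [integral_const_mul] at hrad
  change ∫ y, _ ∂(nuK (N+1)) = _ at hpol
  rw [hv, hrad, Nn_eq] at hpol
  set I := ∫ x, hfun (N+1) β τ x * (Real.log (x i) - Real.log (x k)) *
            (Real.log (x i) - Real.log (x l)) /
          (kfun (N+1) β τ x ^ 2 * x m ^ τ * x n ^ τ) ∂(simplexMeasure (N+1)) with hIdef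
  have hP : 0 < ∏ j, β j := Finset.prod_pos (fun j _ => hβ j)
  have hm := hβ m
  have hn := hβ n
  have hkd : 0 < 1 + kd m n := by unfold kd; split_ifs <;> norm_num
  have hfac : (Nat.factorial (N+2) : ℝ) = (N+2) * (N+1) * Nat.factorial N := by
    rw [Nat.factorial_succ, Nat.factorial_succ]; push_cast; ring
  have hNf : (0:ℝ) < Nat.factorial N := by exact_mod_cast Nat.factorial_pos N
  set E := (eE τ (β i) (cc m n i) - eE τ (β k) (cc m n k)) *
        (eE τ (β i) (cc m n i) - eE τ (β l) (cc m n l))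
        + (1 - kd i l - kd i k) * eV τ (cc m n i) + kd k l * eV τ (cc m n k) with hE
  have hLHS : (((N+1:ℕ) : ℝ) * (((N+1:ℕ) : ℝ) + 1) * β m * β n /
      (J0 (N+1) β τ * (1 + kd m n))) * I = E := by
    have hI2 : I = τ / ((N+2) * (N+1) * Nat.factorial N) *
        (τ⁻¹ ^ (N+1) * (∏ j, β j)⁻¹ * ((β m)⁻¹ * (β n)⁻¹) * (1 + kd m n) * E) := by
      rw [hpol, hfac]; field_simp
    rw [hI2, inv_pow, pow_succ]
    unfold J0
    simp only [Nat.add_sub_cancel]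
    push_cast
    field_simp
    ring
  rw [hLHS, hE]
  unfold eE eV
  simp only [mu_cc, qu_cc]
  have hc := const_id i k l m n
  rw [← hc]
  field_simp
  ring
end
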